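/- arXiv:2503.00966 — 2 statements merged into one kernel-verified Lean document; each statement's English description precedes it below -/
import Mathlib

section
/- Let A, B, C, E be finite-dimensional complex inner product spaces and Ψ ∈ A ⊗ B ⊗ C ⊗ E. Let a ∈ A, b ∈ B, c ∈ C be unit vectors. Suppose the contraction of Ψ against a in the A-slot is nonzero and equals b ⊗ χ for some χ ∈ C ⊗ E, and the contraction of Ψ against b in the B-slot is nonzero and equals (up to reordering of factors) c ⊗ χ′ for some χ′ ∈ A ⊗ E. Then the contraction of Ψ against a in the A-slot equals b ⊗ c ⊗ χ″ for some nonzero χ″ ∈ E. -/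
/-!
Statement 1: the inductive step of chained relative states, in the four-factor case
`Ψ ∈ A ⊗ B ⊗ C ⊗ E` (associated as `A ⊗ (B ⊗ (C ⊗ E))`).

The contraction of `Ψ` against a unit vector `φ` in a slot is `(⟨φ| ⊗ I)Ψ`,
implemented by `contractFirst φ` acting on the first factor of a binary tensor
product (other slots are reached by tensoring with identities); `(⟨φ| ⊗ I)` is
`TensorProduct.map ⟨φ| id` followed by the canonical identification `ℂ ⊗ M ≃ M`.
The reordering `C ⊗ (A ⊗ E) ≃ A ⊗ (C ⊗ E)` is the canonical `TensorProduct.leftComm`.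
-/

open scoped TensorProduct

noncomputable section

/-- The linear functional `⟨φ| = ⟪φ, ·⟫` on an inner product space. -/
def bra {H : Type*} [NormedAddCommGroup H] [InnerProductSpace ℂ H] (φ : H) :
    H →ₗ[ℂ] ℂ :=
  (innerSL ℂ φ).toLinearMap

/-- Contraction `(⟨φ| ⊗ I) : H ⊗ M →ₗ M` against `φ` in the first slot. -/
def contractFirst {H M : Type*} [NormedAddCommGroup H] [InnerProductSpace ℂ H]
    [AddCommGroup M] [Module ℂ M] (φ : H) : H ⊗[ℂ] M →ₗ[ℂ] M :=
  (TensorProduct.lid ℂ M).toLinearMap ∘ₗ TensorProduct.map (bra φ) LinearMap.id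

@[simp]
theorem contractFirst_tmul {H M : Type*} [NormedAddCommGroup H] [InnerProductSpace ℂ H]
    [AddCommGroup M] [Module ℂ M] (φ x : H) (m : M) :
    contractFirst φ (x ⊗ₜ[ℂ] m) = inner ℂ φ x • m := by
  simp [contractFirst, bra]

/-- Contracting the first slot commutes with any linear map applied to the remaining factors. -/
theorem contractFirst_map_id {H M N : Type*} [NormedAddCommGroup H] [InnerProductSpace ℂ H]
    [AddCommGroup M] [Module ℂ M] [AddCommGroup N] [Module ℂ N] (φ : H) (f : M →ₗ[ℂ] N)
    (t : H ⊗[ℂ] M) :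
    contractFirst φ (TensorProduct.map LinearMap.id f t) = f (contractFirst φ t) := by
  induction t with
  | zero => simp
  | tmul x m => simp
  | add s t hs ht => simp only [map_add, hs, ht]

theorem contractFirst_leftComm_tmul {H M N : Type*} [NormedAddCommGroup H]
    [InnerProductSpace ℂ H] [AddCommGroup M] [Module ℂ M] [AddCommGroup N] [Module ℂ N]
    (φ : H) (m : M) (t : H ⊗[ℂ] N) :
    contractFirst φ (TensorProduct.leftComm ℂ M H N (m ⊗ₜ[ℂ] t)) =
      m ⊗ₜ[ℂ] contractFirst φ t := by
  induction t with
  | zero => simp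
  | tmul x n => simp
  | add s t hs ht => simp only [TensorProduct.tmul_add, map_add, hs, ht]

theorem chained_relative_states_inductive_step
    {A B C E : Type*}
    [NormedAddCommGroup A] [InnerProductSpace ℂ A] [FiniteDimensional ℂ A]
    [NormedAddCommGroup B] [InnerProductSpace ℂ B] [FiniteDimensional ℂ B]
    [NormedAddCommGroup C] [InnerProductSpace ℂ C] [FiniteDimensional ℂ C]
    [NormedAddCommGroup E] [InnerProductSpace ℂ E] [FiniteDimensional ℂ E]
    (Ψ : A ⊗[ℂ] (B ⊗[ℂ] (C ⊗[ℂ] E)))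
    (a : A) (b : B) (c : C) (ha : ‖a‖ = 1) (hb : ‖b‖ = 1) (hc : ‖c‖ = 1)
    -- the contraction of Ψ against a in the A-slot is nonzero and equals b ⊗ χ
    (hA0 : contractFirst a Ψ ≠ 0)
    (hA : ∃ χ : C ⊗[ℂ] E, contractFirst a Ψ = b ⊗ₜ[ℂ] χ)
    -- the contraction of Ψ against b in the B-slot is nonzero and equals
    -- (up to the canonical reordering) c ⊗ χ′ with χ′ ∈ A ⊗ E
    (hB0 : TensorProduct.map LinearMap.id (contractFirst b) Ψ ≠ 0)
    (hB : ∃ χ' : A ⊗[ℂ] E, TensorProduct.map LinearMap.id (contractFirst b) Ψ =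
      TensorProduct.leftComm ℂ C A E (c ⊗ₜ[ℂ] χ')) :
    ∃ χ'' : E, χ'' ≠ 0 ∧ contractFirst a Ψ = b ⊗ₜ[ℂ] (c ⊗ₜ[ℂ] χ'') := by
  obtain ⟨χ, hχ⟩ := hA
  obtain ⟨χ', hχ'⟩ := hB
  have key : χ = c ⊗ₜ[ℂ] contractFirst a χ' := by
    rw [← contractFirst_leftComm_tmul, ← hχ', contractFirst_map_id, hχ, contractFirst_tmul,
      inner_self_eq_norm_sq_to_K, hb]
    simp
  rw [key] at hχ
  refine ⟨contractFirst a χ', fun h => hA0 ?_, hχ⟩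
  rw [hχ, h, TensorProduct.tmul_zero, TensorProduct.tmul_zero]

end
end

section
/- Let H_R = H_S = ℂ² with standard basis e₀, e₁, and let H_A = H_B = H_U = H_W = ℂ³ with orthonormal bases {b₀, b₁, b⊥} for H_A and H_B and {v₊, v₋, v⊥} for H_U and H_W. Set Φ±_{RA} = (e₀ ⊗ b₀ ± e₁ ⊗ b₁)/√2 ∈ H_R ⊗ H_A and Φ±_{SB} = (e₀ ⊗ b₀ ± e₁ ⊗ b₁)/√2 ∈ H_S ⊗ H_B. Let Ψ₀ = (√(1/3) e₀ + √(2/3) e₁)_R ⊗ (b⊥)_A ⊗ (e₀)_S ⊗ (b⊥)_B ⊗ (v⊥)_U ⊗ (v⊥)_W. Let M_A, P, M_B, M_U, M_W be any unitary operators on the full tensor product H_R ⊗ H_A ⊗ H_S ⊗ H_B ⊗ H_U ⊗ H_W acting as the identity outside the indicated factors and satisfying: M_A(e_r ⊗ b⊥) = e_r ⊗ b_r on H_R ⊗ H_A for r ∈ {0,1}; P(b₀ ⊗ e_s) = b₀ ⊗ e_s, P(b₁ ⊗ e₀) = b₁ ⊗ (e₀+e₁)/√2, P(b₁ ⊗ e₁)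 = b₁ ⊗ (e₀−e₁)/√2 on H_A ⊗ H_S; M_B(e_s ⊗ b⊥) = e_s ⊗ b_s on H_S ⊗ H_B for s ∈ {0,1}; M_U(Φ±_{RA} ⊗ v⊥) = Φ±_{RA} ⊗ v± on H_R ⊗ H_A ⊗ H_U; M_W(Φ±_{SB} ⊗ v⊥) = Φ±_{SB} ⊗ v± on H_S ⊗ H_B ⊗ H_W. Then M_W M_U M_B P M_A Ψ₀ = √(3/4) Φ⁺_{RA} ⊗ Φ⁺_{SB} ⊗ v₊ ⊗ v₊ + √(1/12) Φ⁺_{RA} ⊗ Φ⁻_{SB} ⊗ v₊ ⊗ v₋ − √(1/12) Φ⁻_{RA} ⊗ Φ⁺_{SB} ⊗ v₋ ⊗ v₊ + √(1/12) Φ⁻_{RA} ⊗ Φ⁻_{SB} ⊗ v₋ ⊗ v₋ (with the tensor factors reordered as R, A, S, B, U, W). -/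
/-!
Statement 9: computation of the final state of the Frauchiger–Renner protocol
(Eq. (3) of the paper).

`H_R = H_S = ℂ²` with basis `e 0, e 1`; `H_A = H_B = H_U = H_W = ℂ³`.  In the `A`
and `B` factors the basis `bv 0, bv 1, bv 2` plays the role of `b₀, b₁, b⊥`, and in
the `U` and `W` factors it plays the role of `v₊, v₋, v⊥`.  The total space is
`T = R ⊗ (A ⊗ (S ⊗ (B ⊗ (U ⊗ W))))`.

Each protocol operator acts as the identity outside the indicated factors: it is the
conjugate, by the canonical reordering equivalence moving the indicated factors to
the front, of `m ⊗ id` where `m` is an operator on the indicated factors alone.  The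
theorem is stated for arbitrary (not necessarily unitary) extensions `m` satisfying
the specified partial actions; this covers in particular all unitary extensions,
which is all that is needed since the initial state only meets the specified
domains (and unitarity of an operator on the full tensor product is not expressible
in Mathlib, which lacks an inner product space structure on tensor products).
-/

open scoped TensorProduct

set_option synthInstance.maxHeartbeats 1000000
set_option maxHeartbeats 1000000

noncomputable section

/-- The qubit space `ℂ²` (systems `R` and `S`). -/
abbrev Q : Type := EuclideanSpace ℂ (Fin 2)

/-- The agent space `ℂ³` (systems `A`, `B`, `U`, `W`). -/
abbrev A3 : Type := EuclideanSpace ℂ (Fin 3)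

/-- The standard orthonormal basis of `ℂ²`. -/
def e (i : Fin 2) : Q := EuclideanSpace.single i 1

/-- The standard orthonormal basis of `ℂ³`: `bv 0 = b₀ = v₊`, `bv 1 = b₁ = v₋`,
`bv 2 = b⊥ = v⊥`. -/
def bv (i : Fin 3) : A3 := EuclideanSpace.single i 1

/-- `√x` as a complex scalar. -/
def c (x : ℝ) : ℂ := (Real.sqrt x : ℂ)

/-- `Φ⁺ = (e₀ ⊗ b₀ + e₁ ⊗ b₁)/√2` (used for both `Φ⁺_{RA}` and `Φ⁺_{SB}`). -/
def Φp : Q ⊗[ℂ] A3 := (c 2)⁻¹ • (e 0 ⊗ₜ[ℂ] bv 0 + e 1 ⊗ₜ[ℂ] bv 1)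

/-- `Φ⁻ = (e₀ ⊗ b₀ − e₁ ⊗ b₁)/√2` (used for both `Φ⁻_{RA}` and `Φ⁻_{SB}`). -/
def Φm : Q ⊗[ℂ] A3 := (c 2)⁻¹ • (e 0 ⊗ₜ[ℂ] bv 0 - e 1 ⊗ₜ[ℂ] bv 1)

/-- The full state space, with factors ordered `R, A, S, B, U, W`. -/
abbrev T : Type := Q ⊗[ℂ] (A3 ⊗[ℂ] (Q ⊗[ℂ] (A3 ⊗[ℂ] (A3 ⊗[ℂ] A3))))

namespace FR

/-- Canonical reordering `T ≃ (R ⊗ A) ⊗ (S ⊗ (B ⊗ (U ⊗ W)))`. -/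
def eRA : T ≃ₗ[ℂ] (Q ⊗[ℂ] A3) ⊗[ℂ] (Q ⊗[ℂ] (A3 ⊗[ℂ] (A3 ⊗[ℂ] A3))) :=
  (TensorProduct.assoc ℂ Q A3 (Q ⊗[ℂ] (A3 ⊗[ℂ] (A3 ⊗[ℂ] A3)))).symm

/-- Canonical reordering `T ≃ (A ⊗ S) ⊗ (R ⊗ (B ⊗ (U ⊗ W)))`. -/
def eAS : T ≃ₗ[ℂ] (A3 ⊗[ℂ] Q) ⊗[ℂ] (Q ⊗[ℂ] (A3 ⊗[ℂ] (A3 ⊗[ℂ] A3))) :=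
  (TensorProduct.congr (LinearEquiv.refl ℂ Q)
      (TensorProduct.assoc ℂ A3 Q (A3 ⊗[ℂ] (A3 ⊗[ℂ] A3))).symm) ≪≫ₗ
    TensorProduct.leftComm ℂ Q (A3 ⊗[ℂ] Q) (A3 ⊗[ℂ] (A3 ⊗[ℂ] A3))

/-- Canonical reordering `T ≃ (S ⊗ B) ⊗ (R ⊗ (A ⊗ (U ⊗ W)))`. -/
def eSB : T ≃ₗ[ℂ] (Q ⊗[ℂ] A3) ⊗[ℂ] (Q ⊗[ℂ] (A3 ⊗[ℂ] (A3 ⊗[ℂ] A3))) :=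
  (TensorProduct.congr (LinearEquiv.refl ℂ Q)
      (TensorProduct.congr (LinearEquiv.refl ℂ A3)
        (TensorProduct.assoc ℂ Q A3 (A3 ⊗[ℂ] A3)).symm)) ≪≫ₗ
  (TensorProduct.congr (LinearEquiv.refl ℂ Q)
      (TensorProduct.leftComm ℂ A3 (Q ⊗[ℂ] A3) (A3 ⊗[ℂ] A3))) ≪≫ₗ
  TensorProduct.leftComm ℂ Q (Q ⊗[ℂ] A3) (A3 ⊗[ℂ] (A3 ⊗[ℂ] A3))

/-- Canonical reordering `T ≃ ((R ⊗ A) ⊗ U) ⊗ (S ⊗ (B ⊗ W))`. -/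
def eRAU : T ≃ₗ[ℂ] ((Q ⊗[ℂ] A3) ⊗[ℂ] A3) ⊗[ℂ] (Q ⊗[ℂ] (A3 ⊗[ℂ] A3)) :=
  -- swap U past B, then past S; regroup A and U with R; finally split off R ⊗ A ⊗ U
  (TensorProduct.congr (LinearEquiv.refl ℂ Q)
      (TensorProduct.congr (LinearEquiv.refl ℂ A3)
        (TensorProduct.congr (LinearEquiv.refl ℂ Q)
          (TensorProduct.leftComm ℂ A3 A3 A3)))) ≪≫ₗ
  (TensorProduct.congr (LinearEquiv.refl ℂ Q)
      (TensorProduct.congr (LinearEquiv.refl ℂ A3)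
        (TensorProduct.leftComm ℂ Q A3 (A3 ⊗[ℂ] A3)))) ≪≫ₗ
  (TensorProduct.congr (LinearEquiv.refl ℂ Q)
      (TensorProduct.assoc ℂ A3 A3 (Q ⊗[ℂ] (A3 ⊗[ℂ] A3))).symm) ≪≫ₗ
  (TensorProduct.assoc ℂ Q (A3 ⊗[ℂ] A3) (Q ⊗[ℂ] (A3 ⊗[ℂ] A3))).symm ≪≫ₗ
  (TensorProduct.congr (TensorProduct.assoc ℂ Q A3 A3).symm
      (LinearEquiv.refl ℂ (Q ⊗[ℂ] (A3 ⊗[ℂ] A3))))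

/-- Canonical reordering `T ≃ ((S ⊗ B) ⊗ W) ⊗ (R ⊗ (A ⊗ U))`. -/
def eSBW : T ≃ₗ[ℂ] ((Q ⊗[ℂ] A3) ⊗[ℂ] A3) ⊗[ℂ] (Q ⊗[ℂ] (A3 ⊗[ℂ] A3)) :=
  -- swap U past B and S; group (S ⊗ B) ⊗ W; then move it to the front
  (TensorProduct.congr (LinearEquiv.refl ℂ Q)
      (TensorProduct.congr (LinearEquiv.refl ℂ A3)
        (TensorProduct.congr (LinearEquiv.refl ℂ Q)
          (TensorProduct.leftComm ℂ A3 A3 A3)))) ≪≫ₗ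
  (TensorProduct.congr (LinearEquiv.refl ℂ Q)
      (TensorProduct.congr (LinearEquiv.refl ℂ A3)
        (TensorProduct.leftComm ℂ Q A3 (A3 ⊗[ℂ] A3)))) ≪≫ₗ
  (TensorProduct.congr (LinearEquiv.refl ℂ Q)
      (TensorProduct.congr (LinearEquiv.refl ℂ A3)
        (TensorProduct.congr (LinearEquiv.refl ℂ A3)
          (TensorProduct.assoc ℂ Q A3 A3).symm))) ≪≫ₗ
  (TensorProduct.congr (LinearEquiv.refl ℂ Q)
      (TensorProduct.congr (LinearEquiv.refl ℂ A3)
        (TensorProduct.comm ℂ A3 ((Q ⊗[ℂ] A3) ⊗[ℂ] A3)))) ≪≫ₗ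
  (TensorProduct.congr (LinearEquiv.refl ℂ Q)
      (TensorProduct.leftComm ℂ A3 ((Q ⊗[ℂ] A3) ⊗[ℂ] A3) A3)) ≪≫ₗ
  TensorProduct.leftComm ℂ Q ((Q ⊗[ℂ] A3) ⊗[ℂ] A3) (A3 ⊗[ℂ] A3)

/-- Canonical reordering `T ≃ (R ⊗ A) ⊗ ((S ⊗ B) ⊗ (U ⊗ W))`, used to express the
final state. -/
def eFin : T ≃ₗ[ℂ] (Q ⊗[ℂ] A3) ⊗[ℂ] ((Q ⊗[ℂ] A3) ⊗[ℂ] (A3 ⊗[ℂ] A3)) :=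
  (TensorProduct.congr (LinearEquiv.refl ℂ Q)
      (TensorProduct.congr (LinearEquiv.refl ℂ A3)
        (TensorProduct.assoc ℂ Q A3 (A3 ⊗[ℂ] A3)).symm)) ≪≫ₗ
  (TensorProduct.assoc ℂ Q A3 ((Q ⊗[ℂ] A3) ⊗[ℂ] (A3 ⊗[ℂ] A3))).symm

end FR

open FR

namespace FR

lemma eFin_symm_tmul (r s : Q) (a b : A3) (z : A3 ⊗[ℂ] A3) :
    eFin.symm ((r ⊗ₜ[ℂ] a) ⊗ₜ[ℂ] ((s ⊗ₜ[ℂ] b) ⊗ₜ[ℂ] z)) =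
      r ⊗ₜ[ℂ] (a ⊗ₜ[ℂ] (s ⊗ₜ[ℂ] (b ⊗ₜ[ℂ] z))) := rfl

/-- Induction on a pair of two-factor states: additivity in each argument reduces to pure tensors. -/
lemma pair_induction {motive : Q ⊗[ℂ] A3 → Q ⊗[ℂ] A3 → Prop}
    (zero_left : ∀ y, motive 0 y) (zero_right : ∀ x, motive x 0)
    (tmul : ∀ r a s b, motive (r ⊗ₜ[ℂ] a) (s ⊗ₜ[ℂ] b))
    (add_left : ∀ x x' y, motive x y → motive x' y → motive (x + x') y)
    (add_right : ∀ x y y', motive x y → motive x y' → motive x (y + y'))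
    (x y : Q ⊗[ℂ] A3) : motive x y := by
  induction x using TensorProduct.induction_on with
  | zero => exact zero_left y
  | add x x' hx hx' => exact add_left x x' y hx hx'
  | tmul r a =>
    induction y using TensorProduct.induction_on with
    | zero => exact zero_right _
    | add y y' hy hy' => exact add_right _ y y' hy hy'
    | tmul s b => exact tmul r a s b

lemma eRA_eFin_symm (x y : Q ⊗[ℂ] A3) (z : A3 ⊗[ℂ] A3) :
    eRA (eFin.symm (x ⊗ₜ[ℂ] (y ⊗ₜ[ℂ] z))) =
      x ⊗ₜ[ℂ] TensorProduct.assoc ℂ Q A3 _ (y ⊗ₜ[ℂ] z) := by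
  induction x, y using pair_induction with
  | zero_left y => simp only [TensorProduct.zero_tmul, map_zero]
  | zero_right x => simp only [TensorProduct.zero_tmul, TensorProduct.tmul_zero, map_zero]
  | tmul r a s b => rfl
  | add_left x x' y h h' =>
    simp only [TensorProduct.add_tmul, map_add, h, h']
  | add_right x y y' h h' =>
    simp only [TensorProduct.add_tmul, TensorProduct.tmul_add, map_add, h, h']

lemma eSB_eFin_symm (x y : Q ⊗[ℂ] A3) (z : A3 ⊗[ℂ] A3) :
    eSB (eFin.symm (x ⊗ₜ[ℂ] (y ⊗ₜ[ℂ] z))) =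
      y ⊗ₜ[ℂ] TensorProduct.assoc ℂ Q A3 _ (x ⊗ₜ[ℂ] z) := by
  induction x, y using pair_induction with
  | zero_left y => simp only [TensorProduct.zero_tmul, TensorProduct.tmul_zero, map_zero]
  | zero_right x => simp only [TensorProduct.zero_tmul, TensorProduct.tmul_zero, map_zero]
  | tmul r a s b => rfl
  | add_left x x' y h h' =>
    simp only [TensorProduct.add_tmul, TensorProduct.tmul_add, map_add, h, h']
  | add_right x y y' h h' =>
    simp only [TensorProduct.add_tmul, TensorProduct.tmul_add, map_add, h, h']

lemma eRAU_eFin_symm (x y : Q ⊗[ℂ] A3) (u w : A3) :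
    eRAU (eFin.symm (x ⊗ₜ[ℂ] (y ⊗ₜ[ℂ] (u ⊗ₜ[ℂ] w)))) =
      (x ⊗ₜ[ℂ] u) ⊗ₜ[ℂ] TensorProduct.assoc ℂ Q A3 _ (y ⊗ₜ[ℂ] w) := by
  induction x, y using pair_induction with
  | zero_left y => simp only [TensorProduct.zero_tmul, map_zero]
  | zero_right x => simp only [TensorProduct.zero_tmul, TensorProduct.tmul_zero, map_zero]
  | tmul r a s b => rfl
  | add_left x x' y h h' =>
    simp only [TensorProduct.add_tmul, map_add, h, h']
  | add_right x y y' h h' =>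
    simp only [TensorProduct.add_tmul, TensorProduct.tmul_add, map_add, h, h']

lemma eSBW_eFin_symm (x y : Q ⊗[ℂ] A3) (u w : A3) :
    eSBW (eFin.symm (x ⊗ₜ[ℂ] (y ⊗ₜ[ℂ] (u ⊗ₜ[ℂ] w)))) =
      (y ⊗ₜ[ℂ] w) ⊗ₜ[ℂ] TensorProduct.assoc ℂ Q A3 _ (x ⊗ₜ[ℂ] u) := by
  induction x, y using pair_induction with
  | zero_left y => simp only [TensorProduct.zero_tmul, TensorProduct.tmul_zero, map_zero]
  | zero_right x => simp only [TensorProduct.zero_tmul, TensorProduct.tmul_zero, map_zero]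
  | tmul r a s b => rfl
  | add_left x x' y h h' =>
    simp only [TensorProduct.add_tmul, TensorProduct.tmul_add, map_add, h, h']
  | add_right x y y' h h' =>
    simp only [TensorProduct.add_tmul, TensorProduct.tmul_add, map_add, h, h']

lemma map_eRA_eFin_symm (m : Q ⊗[ℂ] A3 →ₗ[ℂ] Q ⊗[ℂ] A3) (x y : Q ⊗[ℂ] A3)
    (z : A3 ⊗[ℂ] A3) :
    eRA.symm (TensorProduct.map m LinearMap.id (eRA (eFin.symm (x ⊗ₜ[ℂ] (y ⊗ₜ[ℂ] z))))) =
      eFin.symm (m x ⊗ₜ[ℂ] (y ⊗ₜ[ℂ] z)) := by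
  rw [LinearEquiv.symm_apply_eq, eRA_eFin_symm, eRA_eFin_symm, TensorProduct.map_tmul,
    LinearMap.id_apply]

lemma map_eSB_eFin_symm (m : Q ⊗[ℂ] A3 →ₗ[ℂ] Q ⊗[ℂ] A3) (x y : Q ⊗[ℂ] A3)
    (z : A3 ⊗[ℂ] A3) :
    eSB.symm (TensorProduct.map m LinearMap.id (eSB (eFin.symm (x ⊗ₜ[ℂ] (y ⊗ₜ[ℂ] z))))) =
      eFin.symm (x ⊗ₜ[ℂ] (m y ⊗ₜ[ℂ] z)) := by
  rw [LinearEquiv.symm_apply_eq, eSB_eFin_symm, eSB_eFin_symm, TensorProduct.map_tmul,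
    LinearMap.id_apply]

lemma map_eRAU_eFin_symm {m : (Q ⊗[ℂ] A3) ⊗[ℂ] A3 →ₗ[ℂ] (Q ⊗[ℂ] A3) ⊗[ℂ] A3}
    {x : Q ⊗[ℂ] A3} {u u' : A3} (h : m (x ⊗ₜ[ℂ] u) = x ⊗ₜ[ℂ] u') (y : Q ⊗[ℂ] A3) (w : A3) :
    eRAU.symm (TensorProduct.map m LinearMap.id
        (eRAU (eFin.symm (x ⊗ₜ[ℂ] (y ⊗ₜ[ℂ] (u ⊗ₜ[ℂ] w)))))) =
      eFin.symm (x ⊗ₜ[ℂ] (y ⊗ₜ[ℂ] (u' ⊗ₜ[ℂ] w))) := by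
  rw [LinearEquiv.symm_apply_eq, eRAU_eFin_symm, eRAU_eFin_symm, TensorProduct.map_tmul,
    LinearMap.id_apply, h]

lemma map_eSBW_eFin_symm {m : (Q ⊗[ℂ] A3) ⊗[ℂ] A3 →ₗ[ℂ] (Q ⊗[ℂ] A3) ⊗[ℂ] A3}
    {y : Q ⊗[ℂ] A3} {w w' : A3} (h : m (y ⊗ₜ[ℂ] w) = y ⊗ₜ[ℂ] w') (x : Q ⊗[ℂ] A3) (u : A3) :
    eSBW.symm (TensorProduct.map m LinearMap.id
        (eSBW (eFin.symm (x ⊗ₜ[ℂ] (y ⊗ₜ[ℂ] (u ⊗ₜ[ℂ] w)))))) =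
      eFin.symm (x ⊗ₜ[ℂ] (y ⊗ₜ[ℂ] (u ⊗ₜ[ℂ] w'))) := by
  rw [LinearEquiv.symm_apply_eq, eSBW_eFin_symm, eSBW_eFin_symm, TensorProduct.map_tmul,
    LinearMap.id_apply, h]

lemma map_eAS_eFin_symm {m : A3 ⊗[ℂ] Q →ₗ[ℂ] A3 ⊗[ℂ] Q} {a : A3} {s s' : Q}
    (h : m (a ⊗ₜ[ℂ] s) = a ⊗ₜ[ℂ] s') (r : Q) (b : A3) (z : A3 ⊗[ℂ] A3) :
    eAS.symm (TensorProduct.map m LinearMap.id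
        (eAS (eFin.symm ((r ⊗ₜ[ℂ] a) ⊗ₜ[ℂ] ((s ⊗ₜ[ℂ] b) ⊗ₜ[ℂ] z))))) =
      eFin.symm ((r ⊗ₜ[ℂ] a) ⊗ₜ[ℂ] ((s' ⊗ₜ[ℂ] b) ⊗ₜ[ℂ] z)) := by
  have eAS_eFin_symm : ∀ t : Q, eAS (eFin.symm ((r ⊗ₜ[ℂ] a) ⊗ₜ[ℂ] ((t ⊗ₜ[ℂ] b) ⊗ₜ[ℂ] z))) =
      (a ⊗ₜ[ℂ] t) ⊗ₜ[ℂ] (r ⊗ₜ[ℂ] (b ⊗ₜ[ℂ] z)) := fun _ => rfl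
  rw [LinearEquiv.symm_apply_eq, eAS_eFin_symm, eAS_eFin_symm, TensorProduct.map_tmul,
    LinearMap.id_apply, h]

end FR

lemma c_mul_self {x : ℝ} (hx : 0 ≤ x) : c x * c x = x := by
  rw [c, ← Complex.ofReal_mul, Real.mul_self_sqrt hx]

lemma c_two_ne_zero : c 2 ≠ 0 := by
  simp [c]

lemma c_mul {x : ℝ} (hx : 0 ≤ x) (y : ℝ) : c (x * y) = c x * c y := by
  rw [c, Real.sqrt_mul hx, Complex.ofReal_mul, c, c]

lemma c_sq {x : ℝ} (hx : 0 ≤ x) : c (x ^ 2) = x := by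
  rw [c, Real.sqrt_sq hx]

lemma e_zero_tmul_bv_zero : e 0 ⊗ₜ[ℂ] bv 0 = (c 2 / 2) • (Φp + Φm) := by
  have := c_two_ne_zero
  rw [Φp, Φm]
  match_scalars <;> field_simp <;> ring

lemma e_one_tmul_bv_one : e 1 ⊗ₜ[ℂ] bv 1 = (c 2 / 2) • (Φp - Φm) := by
  have := c_two_ne_zero
  rw [Φp, Φm]
  match_scalars <;> field_simp <;> ring

/-- for any linear extensions `mA, p, mB, mU, mW` of the partially
specified measurement/preparation operators (in particular for the restrictions to
the indicated factors of any unitary operators as in the paper), applying the five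
protocol steps to the initial state `Ψ₀` yields the Frauchiger–Renner final state
`√(3/4) Φ⁺_{RA} Φ⁺_{SB} v₊ v₊ + √(1/12) Φ⁺_{RA} Φ⁻_{SB} v₊ v₋
  − √(1/12) Φ⁻_{RA} Φ⁺_{SB} v₋ v₊ + √(1/12) Φ⁻_{RA} Φ⁻_{SB} v₋ v₋`. -/
theorem frauchiger_renner_final_state
    -- Alice's measurement of R, acting on the factors (R, A)
    (mA : Q ⊗[ℂ] A3 →ₗ[ℂ] Q ⊗[ℂ] A3)
    (hmA : ∀ r : Fin 2, mA (e r ⊗ₜ[ℂ] bv 2) = e r ⊗ₜ[ℂ] bv r.castSucc)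
    -- Alice's conditional preparation of S, acting on the factors (A, S)
    (p : A3 ⊗[ℂ] Q →ₗ[ℂ] A3 ⊗[ℂ] Q)
    (hp0 : ∀ s : Fin 2, p (bv 0 ⊗ₜ[ℂ] e s) = bv 0 ⊗ₜ[ℂ] e s)
    (hp10 : p (bv 1 ⊗ₜ[ℂ] e 0) = bv 1 ⊗ₜ[ℂ] ((c 2)⁻¹ • (e 0 + e 1)))
    (hp11 : p (bv 1 ⊗ₜ[ℂ] e 1) = bv 1 ⊗ₜ[ℂ] ((c 2)⁻¹ • (e 0 - e 1)))
    -- Bob's measurement of S, acting on the factors (S, B)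
    (mB : Q ⊗[ℂ] A3 →ₗ[ℂ] Q ⊗[ℂ] A3)
    (hmB : ∀ s : Fin 2, mB (e s ⊗ₜ[ℂ] bv 2) = e s ⊗ₜ[ℂ] bv s.castSucc)
    -- Ursula's Bell-basis measurement of (R, A), acting on the factors (R, A, U)
    (mU : (Q ⊗[ℂ] A3) ⊗[ℂ] A3 →ₗ[ℂ] (Q ⊗[ℂ] A3) ⊗[ℂ] A3)
    (hmUp : mU (Φp ⊗ₜ[ℂ] bv 2) = Φp ⊗ₜ[ℂ] bv 0)
    (hmUm : mU (Φm ⊗ₜ[ℂ] bv 2) = Φm ⊗ₜ[ℂ] bv 1)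
    -- Wigner's Bell-basis measurement of (S, B), acting on the factors (S, B, W)
    (mW : (Q ⊗[ℂ] A3) ⊗[ℂ] A3 →ₗ[ℂ] (Q ⊗[ℂ] A3) ⊗[ℂ] A3)
    (hmWp : mW (Φp ⊗ₜ[ℂ] bv 2) = Φp ⊗ₜ[ℂ] bv 0)
    (hmWm : mW (Φm ⊗ₜ[ℂ] bv 2) = Φm ⊗ₜ[ℂ] bv 1) :
    -- the global operators, each acting as the identity outside the indicated factors
    let MA : T →ₗ[ℂ] T :=
      eRA.symm.toLinearMap ∘ₗ TensorProduct.map mA LinearMap.id ∘ₗ eRA.toLinearMap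
    let P : T →ₗ[ℂ] T :=
      eAS.symm.toLinearMap ∘ₗ TensorProduct.map p LinearMap.id ∘ₗ eAS.toLinearMap
    let MB : T →ₗ[ℂ] T :=
      eSB.symm.toLinearMap ∘ₗ TensorProduct.map mB LinearMap.id ∘ₗ eSB.toLinearMap
    let MU : T →ₗ[ℂ] T :=
      eRAU.symm.toLinearMap ∘ₗ TensorProduct.map mU LinearMap.id ∘ₗ eRAU.toLinearMap
    let MW : T →ₗ[ℂ] T :=
      eSBW.symm.toLinearMap ∘ₗ TensorProduct.map mW LinearMap.id ∘ₗ eSBW.toLinearMap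
    -- the initial state: R in √(1/3)|0⟩ + √(2/3)|1⟩, S in |0⟩, all agents in ⊥
    let Ψ₀ : T :=
      (c (1/3) • e 0 + c (2/3) • e 1) ⊗ₜ[ℂ]
        (bv 2 ⊗ₜ[ℂ] (e 0 ⊗ₜ[ℂ] (bv 2 ⊗ₜ[ℂ] (bv 2 ⊗ₜ[ℂ] bv 2))))
    eFin (MW (MU (MB (P (MA Ψ₀))))) =
      c (3/4) • (Φp ⊗ₜ[ℂ] (Φp ⊗ₜ[ℂ] (bv 0 ⊗ₜ[ℂ] bv 0)))
        + c (1/12) • (Φp ⊗ₜ[ℂ] (Φm ⊗ₜ[ℂ] (bv 0 ⊗ₜ[ℂ] bv 1)))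
        + (-(c (1/12))) • (Φm ⊗ₜ[ℂ] (Φp ⊗ₜ[ℂ] (bv 1 ⊗ₜ[ℂ] bv 0)))
        + c (1/12) • (Φm ⊗ₜ[ℂ] (Φm ⊗ₜ[ℂ] (bv 1 ⊗ₜ[ℂ] bv 1))) := by
  intro MA P MB MU MW Ψ₀
  have h2 : c 2 * c 2 = 2 := by simpa using c_mul_self (x := 2) (by norm_num)
  have h23 : c (2 / 3) = c 2 * c (1 / 3) := by
    rw [← c_mul (by norm_num)]; norm_num
  have h34 : c (3 / 4) = 3 / 2 * c (1 / 3) := by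
    have h := c_sq (x := 3 / 2) (by norm_num)
    push_cast at h
    rw [← h, ← c_mul (by norm_num)]; norm_num
  have h12 : c (1 / 12) = 1 / 2 * c (1 / 3) := by
    have h := c_sq (x := 1 / 2) (by norm_num)
    push_cast at h
    rw [← h, ← c_mul (by norm_num)]; norm_num
  -- the state after Alice's measurement and preparation and Bob's measurement
  have hMA : MA Ψ₀ = eFin.symm
      (c (1 / 3) • ((e 0 ⊗ₜ[ℂ] bv 0) ⊗ₜ[ℂ] ((e 0 ⊗ₜ[ℂ] bv 2) ⊗ₜ[ℂ] (bv 2 ⊗ₜ[ℂ] bv 2))) +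
        c (2 / 3) • ((e 1 ⊗ₜ[ℂ] bv 1) ⊗ₜ[ℂ] ((e 0 ⊗ₜ[ℂ] bv 2) ⊗ₜ[ℂ] (bv 2 ⊗ₜ[ℂ] bv 2)))) := by
    simp only [MA, Ψ₀, LinearMap.comp_apply, LinearEquiv.coe_coe, ← eFin_symm_tmul,
      map_eRA_eFin_symm, TensorProduct.add_tmul, ← TensorProduct.smul_tmul', map_add, map_smul,
      hmA]
    rfl
  have hP : P (MA Ψ₀) = eFin.symm
      (c (1 / 3) • ((e 0 ⊗ₜ[ℂ] bv 0) ⊗ₜ[ℂ] ((e 0 ⊗ₜ[ℂ] bv 2) ⊗ₜ[ℂ] (bv 2 ⊗ₜ[ℂ] bv 2))) +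
        c (2 / 3) • ((e 1 ⊗ₜ[ℂ] bv 1) ⊗ₜ[ℂ]
          ((((c 2)⁻¹ • (e 0 + e 1)) ⊗ₜ[ℂ] bv 2) ⊗ₜ[ℂ] (bv 2 ⊗ₜ[ℂ] bv 2)))) := by
    simp only [hMA, P, LinearMap.comp_apply, LinearEquiv.coe_coe, map_add, map_smul,
      map_eAS_eFin_symm (hp0 0), map_eAS_eFin_symm hp10]
  have hMB : MB (P (MA Ψ₀)) = eFin.symm
      (c (1 / 3) • ((e 0 ⊗ₜ[ℂ] bv 0) ⊗ₜ[ℂ] ((e 0 ⊗ₜ[ℂ] bv 0) ⊗ₜ[ℂ] (bv 2 ⊗ₜ[ℂ] bv 2))) +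
        c (2 / 3) • ((e 1 ⊗ₜ[ℂ] bv 1) ⊗ₜ[ℂ] (Φp ⊗ₜ[ℂ] (bv 2 ⊗ₜ[ℂ] bv 2)))) := by
    have hΦ : mB (((c 2)⁻¹ • (e 0 + e 1)) ⊗ₜ[ℂ] bv 2) = Φp := by
      rw [← TensorProduct.smul_tmul', TensorProduct.add_tmul, map_smul, map_add, hmB, hmB]
      rfl
    simp only [hP, MB, LinearMap.comp_apply, LinearEquiv.coe_coe, map_add, map_smul,
      map_eSB_eFin_symm, hΦ, hmB]
    rfl
  -- the same state in the Bell-type bases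
  have hBell : MB (P (MA Ψ₀)) = eFin.symm
      (c (3 / 4) • (Φp ⊗ₜ[ℂ] (Φp ⊗ₜ[ℂ] (bv 2 ⊗ₜ[ℂ] bv 2)))
        + c (1 / 12) • (Φp ⊗ₜ[ℂ] (Φm ⊗ₜ[ℂ] (bv 2 ⊗ₜ[ℂ] bv 2)))
        + (-(c (1 / 12))) • (Φm ⊗ₜ[ℂ] (Φp ⊗ₜ[ℂ] (bv 2 ⊗ₜ[ℂ] bv 2)))
        + c (1 / 12) • (Φm ⊗ₜ[ℂ] (Φm ⊗ₜ[ℂ] (bv 2 ⊗ₜ[ℂ] bv 2)))) := by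
    rw [hMB, e_zero_tmul_bv_zero, e_one_tmul_bv_one, h23, h34, h12]
    congr 1
    simp only [← TensorProduct.smul_tmul', TensorProduct.tmul_smul, TensorProduct.add_tmul,
      TensorProduct.sub_tmul, TensorProduct.tmul_add]
    match_scalars <;> grind
  simp only [hBell, MU, MW, LinearMap.comp_apply, LinearEquiv.coe_coe, map_add, map_smul,
    map_eRAU_eFin_symm hmUp, map_eRAU_eFin_symm hmUm, map_eSBW_eFin_symm hmWp,
    map_eSBW_eFin_symm hmWm, LinearEquiv.apply_symm_apply]

end
end
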